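/- arXiv:1005.2512 — 5 statements merged into one kernel-verified Lean document; each statement's English description precedes it below -/
import Mathlib

section
/- Let k, μ₊, μ₋ > 0, γ ≥ 0, and ϖ ∈ ℝ with ϖ < γ. For m ∈ ℕ, m ≥ 1, define λ_m := (k·m·tanh(m)/(μ₊ + μ₋·tanh²(m)))·(ϖ − γ·m²). Then for every m ≥ 1, λ_m ≤ −k·tanh(1)·(γ − ϖ)/(μ₊ + μ₋·tanh(1)). -/
/-! Write `t = tanh m` and `s = tanh 1`, so that `0 < s ≤ t ≤ 1 ≤ m`. Since `γ ≥ 0`,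
`γ m² - ϖ ≥ γ - ϖ > 0`, so it suffices to compare the prefactors:
`s / (μ₊ + μ₋ s) ≤ m t / (μ₊ + μ₋ t²)`. After cross-multiplication this is `s ≤ m t`
for the `μ₊` terms and `s t² ≤ m t s` for the `μ₋` terms. -/

/-- stability bound. If `ϖ < γ`, `γ ≥ 0`, then all eigenvalues
`λ_m = (k·m·tanh m/(μ₊ + μ₋·tanh² m))·(ϖ − γ·m²)`, `m ≥ 1`, satisfy the uniform bound
`λ_m ≤ −k·tanh(1)·(γ − ϖ)/(μ₊ + μ₋·tanh 1)`. -/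
theorem muskat_spectral_bound (k μp μm γ ϖ : ℝ)
    (hk : 0 < k) (hμp : 0 < μp) (hμm : 0 < μm) (hγ : 0 ≤ γ) (h : ϖ < γ) :
    ∀ m : ℕ, 1 ≤ m →
      (k * m * Real.tanh m / (μp + μm * Real.tanh m ^ 2)) * (ϖ - γ * (m : ℝ) ^ 2)
        ≤ -(k * Real.tanh 1 * (γ - ϖ)) / (μp + μm * Real.tanh 1) := by
  intro m hm
  have hm1 : (1 : ℝ) ≤ m := by exact_mod_cast hm
  have hs : 0 < Real.tanh 1 := by
    rw [Real.tanh_eq_sinh_div_cosh]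
    exact div_pos (Real.sinh_pos_iff.mpr one_pos) (Real.cosh_pos 1)
  -- Monotonicity of `tanh`, obtained from that of its inverse `artanh`.
  have hst : Real.tanh 1 ≤ Real.tanh m := by
    rw [← Real.artanh_le_artanh_iff ⟨Real.neg_one_lt_tanh _, Real.tanh_lt_one _⟩
      ⟨Real.neg_one_lt_tanh _, Real.tanh_lt_one _⟩, Real.artanh_tanh, Real.artanh_tanh]
    exact hm1
  have ht1 : Real.tanh m ≤ 1 := (Real.tanh_lt_one _).le
  generalize Real.tanh m = t at *
  generalize Real.tanh 1 = s at *
  generalize (m : ℝ) = x at *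
  have ht : 0 < t := hs.trans_le hst
  have hfac : k * s / (μp + μm * s) ≤ k * x * t / (μp + μm * t ^ 2) := by
    rw [div_le_div_iff₀ (by positivity) (by positivity)]
    have h1 : s ≤ x * t := by nlinarith
    have h2 : s * t ^ 2 ≤ x * t * s := by
      have h3 : 0 ≤ s * t * (x - t) := mul_nonneg (by positivity) (by linarith)
      linarith
    have h4 : s * (μp + μm * t ^ 2) ≤ x * t * (μp + μm * s) := by
      linarith [mul_le_mul_of_nonneg_left h1 hμp.le, mul_le_mul_of_nonneg_left h2 hμm.le]
    linarith [mul_le_mul_of_nonneg_left h4 hk.le]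
  have hgap : γ - ϖ ≤ γ * x ^ 2 - ϖ := by nlinarith [mul_nonneg hγ (by nlinarith : 0 ≤ x ^ 2 - 1)]
  have hmul := mul_le_mul hfac hgap (by linarith) (by positivity)
  have hrhs : -(k * s * (γ - ϖ)) / (μp + μm * s) = -(k * s / (μp + μm * s) * (γ - ϖ)) := by ring
  rw [hrhs]
  linarith
end

section
/- Let l ≥ 1 be a natural number, γ ∈ ℝ, and set f(x) = cos(l·x). Then ∫₀^{2π} (−9γ·f'(x)²·f'''(x) − 18γ·f'(x)·f''(x)²)·sin(l·x) dx = −(9π/4)·γ·l⁵, and ∫₀^{2π} l³·sin²(l·x) dx = π·l³. Consequently, −(1/3)·(−(9π/4)·γ·l⁵)/(π·l³) = (3/4)·γ·l², and if γ = ϖ/l² for some ϖ ∈ ℝ this value equals 3ϖ/4. -/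
/-!
With `s = sin (l x)` and `c = cos (l x)`, the derivatives of `f = cos (l x)` are `-l s`, `-l² c` and
`l³ s`, so the first integrand is `-9 γ l⁵ (s⁴ - 2 s² c²) = -9 γ l⁵ (3 s⁴ - 2 s²)`. Both integrals
follow from the fundamental theorem of calculus with explicit antiderivatives: in the variable
`u = l x`, `3 s⁴ - 2 s²` is the derivative of `u / 8 - s c / 8 - 3 s³ c / 4`, and `s²` that of
`u / 2 - s c / 2`. Since `s` vanishes at both endpoints, only the terms linear in `u` contribute.
-/

open Real

lemma hasDerivAt_cos_mul (a x : ℝ) :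
    HasDerivAt (fun x : ℝ => Real.cos (a * x)) (-a * Real.sin (a * x)) x := by
  have h := ((hasDerivAt_id x).const_mul a).cos
  simp only [id] at h
  exact h.congr_deriv (by ring)

lemma hasDerivAt_sin_mul (a x : ℝ) :
    HasDerivAt (fun x : ℝ => Real.sin (a * x)) (a * Real.cos (a * x)) x := by
  have h := ((hasDerivAt_id x).const_mul a).sin
  simp only [id] at h
  exact h.congr_deriv (by ring)

lemma sin_nat_mul_two_pi (l : ℕ) : Real.sin (l * (2 * π)) = 0 := by
  have h := Real.sin_nat_mul_pi (2 * l)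
  push_cast at h
  rw [← h]
  ring_nf

lemma integral_sin_sq_mul (l : ℕ) (hl : 1 ≤ l) :
    ∫ x in (0 : ℝ)..(2 * π), Real.sin (l * x) ^ 2 = π := by
  have hl0 : (l : ℝ) ≠ 0 := by positivity
  have hF : ∀ x ∈ Set.uIcc (0 : ℝ) (2 * π), HasDerivAt
      (fun x : ℝ => x / 2 - Real.sin (l * x) * Real.cos (l * x) / (2 * l))
      (Real.sin (l * x) ^ 2) x := by
    intro x _
    refine (((hasDerivAt_id x).div_const 2).sub
      (((hasDerivAt_sin_mul l x).mul (hasDerivAt_cos_mul l x)).div_const (2 * l))).congr_deriv ?_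
    field_simp
    linear_combination -Real.sin_sq_add_cos_sq (l * x)
  rw [intervalIntegral.integral_eq_sub_of_hasDerivAt hF
    (Continuous.intervalIntegrable (by fun_prop) _ _)]
  simp [sin_nat_mul_two_pi]

lemma integral_three_sin_pow_four_sub (l : ℕ) (hl : 1 ≤ l) :
    ∫ x in (0 : ℝ)..(2 * π), (3 * Real.sin (l * x) ^ 4 - 2 * Real.sin (l * x) ^ 2) = π / 4 := by
  have hl0 : (l : ℝ) ≠ 0 := by positivity
  have hF : ∀ x ∈ Set.uIcc (0 : ℝ) (2 * π), HasDerivAt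
      (fun x : ℝ => x / 8 - Real.sin (l * x) * Real.cos (l * x) / (8 * l)
        - 3 * (Real.sin (l * x) ^ 3 * Real.cos (l * x)) / (4 * l))
      (3 * Real.sin (l * x) ^ 4 - 2 * Real.sin (l * x) ^ 2) x := by
    intro x _
    have hs := hasDerivAt_sin_mul l x
    have hc := hasDerivAt_cos_mul l x
    refine ((((hasDerivAt_id x).div_const 8).sub ((hs.mul hc).div_const (8 * l))).sub
      ((((hs.pow 3).mul hc).const_mul 3).div_const (4 * l))).congr_deriv ?_
    have hc2 := Real.cos_sq' (l * x)
    field_simp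
    push_cast
    ring_nf at hc2 ⊢
    simp only [hc2, Pi.pow_apply]
    ring
  rw [intervalIntegral.integral_eq_sub_of_hasDerivAt hF
    (Continuous.intervalIntegrable (by fun_prop) _ _)]
  simp [sin_nat_mul_two_pi]
  ring


/-- the Crandall–Rabinowitz integrals along the `l`-th bifurcation branch.
For `f(x) = cos(l x)`:
`∫₀^{2π} (−9γ f'² f''' − 18γ f' f''²)·sin(lx) dx = −(9π/4)·γ·l⁵`,
`∫₀^{2π} l³·sin²(lx) dx = π·l³`, hence
`−(1/3)·(−(9π/4)γl⁵)/(πl³) = (3/4)·γ·l²`, which equals `3ϖ/4` when `γ = ϖ/l²`. -/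
theorem muskat_crandall_rabinowitz_integrals (l : ℕ) (hl : 1 ≤ l) (γ : ℝ)
    (f : ℝ → ℝ) (hf : f = fun x : ℝ => Real.cos (l * x)) :
    (∫ x in (0 : ℝ)..(2 * π),
        (-9 * γ * (deriv f x) ^ 2 * deriv (deriv (deriv f)) x
          - 18 * γ * deriv f x * (deriv (deriv f) x) ^ 2) * Real.sin (l * x))
      = -(9 * π / 4) * γ * (l : ℝ) ^ 5 ∧
    (∫ x in (0 : ℝ)..(2 * π), (l : ℝ) ^ 3 * Real.sin (l * x) ^ 2) = π * (l : ℝ) ^ 3 ∧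
    -(1 / 3) * (-(9 * π / 4) * γ * (l : ℝ) ^ 5) / (π * (l : ℝ) ^ 3)
      = (3 / 4) * γ * (l : ℝ) ^ 2 ∧
    (∀ ϖ : ℝ, γ = ϖ / (l : ℝ) ^ 2 → (3 / 4) * γ * (l : ℝ) ^ 2 = 3 * ϖ / 4) := by
  have hl0 : (l : ℝ) ≠ 0 := by positivity
  have d1 : deriv f = fun x => -l * Real.sin (l * x) := by
    funext x
    rw [hf]
    exact (hasDerivAt_cos_mul l x).deriv
  have d2 : deriv (deriv f) = fun x => -l ^ 2 * Real.cos (l * x) := by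
    funext x
    rw [d1]
    exact (((hasDerivAt_sin_mul l x).const_mul (-l : ℝ)).congr_deriv (by ring)).deriv
  have d3 : deriv (deriv (deriv f)) = fun x => l ^ 3 * Real.sin (l * x) := by
    funext x
    rw [d2]
    exact (((hasDerivAt_cos_mul l x).const_mul (-l ^ 2 : ℝ)).congr_deriv (by ring)).deriv
  refine ⟨?_, ?_, ?_, ?_⟩
  · rw [d3, d2, d1]
    have h : ∀ x : ℝ, (-9 * γ * (-l * Real.sin (l * x)) ^ 2 * (l ^ 3 * Real.sin (l * x))
          - 18 * γ * (-l * Real.sin (l * x)) * (-l ^ 2 * Real.cos (l * x)) ^ 2) * Real.sin (l * x)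
        = (-9 * γ * l ^ 5) * (3 * Real.sin (l * x) ^ 4 - 2 * Real.sin (l * x) ^ 2) := by
      intro x
      linear_combination (18 * γ * l ^ 5 * Real.sin (l * x) ^ 2) * Real.cos_sq' (l * x)
    simp only [h]
    rw [intervalIntegral.integral_const_mul, integral_three_sin_pow_four_sub l hl]
    ring
  · rw [intervalIntegral.integral_const_mul, integral_sin_sq_mul l hl]
    ring
  · field_simp
    norm_num
  · rintro ϖ rfl
    field_simp
end

section
/- Let f : ℝ → ℝ be twice continuously differentiable with sup|f| < 1, define φ(x,y) := (x, y + (1+y)·f(x)) and ψ(x,y) := (x, (y − f(x))/(1 + f(x))). Let v : ℝ × [−1,0] → ℝ be twice continuously differentiable on an open neighborhood of ℝ × [−1,0]. Then for every (x,y) ∈ ℝ × (−1,0), the Laplacian of v∘ψ evaluated at φ(x,y) satisfies Δ(v∘ψ)(φ(x,y)) = ∂²v/∂x²(x,y) − 2·((1+y)·f'(x)/(1+f(x)))·∂²v/∂x∂y(x,y) + (((1+y)²·f'(x)² + 1)/(1+f(x))²)·∂²v/∂y²(x,y) − (1+y)·((1+f(x))·f''(x) − 2·f'(x)²)/(1+f(x))²·∂v/∂y(x,y).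 -/
/-!
Every second derivative in the claim is the second derivative of the uncurried function `F` along a
plane curve, so `deriv_deriv_comp_curve` expresses it through `D²F` and `DF` at `(x, y)`. The curve
giving the `x`-derivative of `w` is `s ↦ (s, (b - f s) / (1 + f s))` with `b = y + (1 + y) f x`; it
passes through `(x, y)` at `s = x` because `b + 1 = (1 + y) (1 + f x)`. Expanding `D²F` bilinearly
in the standard basis, with symmetry of the mixed derivative, leaves an identity of rational
functions.
-/

/-- Near a point where `F` is `C²`, the derivative of `F` along a curve is `DF` applied to the
velocity. -/
lemma eventually_hasDerivAt_comp_curve {F : ℝ × ℝ → ℝ} {c vel : ℝ → ℝ × ℝ} {t : ℝ}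
    (hF : ContDiffAt ℝ 2 F (c t)) (hc : ∀ s, HasDerivAt c (vel s) s) :
    ∀ᶠ s in nhds t, HasDerivAt (fun r => F (c r)) (fderiv ℝ F (c s) (vel s)) s := by
  have h1 : ∀ᶠ p in nhds (c t), ContDiffAt ℝ 2 F p := hF.eventually (by simp)
  filter_upwards [(hc t).continuousAt.eventually h1] with s hs
  exact (hs.differentiableAt (by norm_num)).hasFDerivAt.comp_hasDerivAt s (hc s)

lemma hasFDerivAt_fderiv_of_contDiffAt {F : ℝ × ℝ → ℝ} {p : ℝ × ℝ} (hF : ContDiffAt ℝ 2 F p) :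
    HasFDerivAt (fderiv ℝ F) (fderiv ℝ (fderiv ℝ F) p) p :=
  ((hF.fderiv_right (m := 1) (by norm_num)).differentiableAt (by norm_num)).hasFDerivAt

/-- Second-order chain rule along a curve `c` with velocity `vel` and acceleration `acc`. -/
lemma deriv_deriv_comp_curve {F : ℝ × ℝ → ℝ} {c vel : ℝ → ℝ × ℝ} {acc : ℝ × ℝ} {t : ℝ}
    (hF : ContDiffAt ℝ 2 F (c t)) (hc : ∀ s, HasDerivAt c (vel s) s)
    (hvel : HasDerivAt vel acc t) :
    deriv (deriv (fun r => F (c r))) t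
      = fderiv ℝ (fderiv ℝ F) (c t) (vel t) (vel t) + fderiv ℝ F (c t) acc := by
  have h : deriv (fun r => F (c r)) =ᶠ[nhds t] fun s => fderiv ℝ F (c s) (vel s) :=
    (eventually_hasDerivAt_comp_curve hF hc).mono fun s hs => hs.deriv
  rw [h.deriv_eq]
  exact (((hasFDerivAt_fderiv_of_contDiffAt hF).comp_hasDerivAt t (hc t)).clm_apply hvel).deriv

/-- explicit representation of the transformed Laplacian
`A₋(f) = φ* Δ φ_*` for the straightening diffeomorphism `φ(x,y) = (x, y + (1+y)f(x))`
of the lower fluid domain, with inverse `ψ(x,y) = (x, (y−f(x))/(1+f(x)))`: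
for `v` twice continuously differentiable on a neighbourhood of `ℝ × [−1,0]` and
`(x,y) ∈ ℝ × (−1,0)`,
`Δ(v∘ψ)(φ(x,y)) = v_xx − 2·((1+y)f'/(1+f))·v_xy + (((1+y)²f'² + 1)/(1+f)²)·v_yy
  − (1+y)·((1+f)f'' − 2f'²)/(1+f)²·v_y`, all partials of `v` evaluated at `(x,y)`. -/
theorem muskat_transformed_laplacian (f : ℝ → ℝ)
    (hf : ContDiff ℝ 2 f) (hsmall : ∀ x, |f x| < 1)
    (v : ℝ → ℝ → ℝ)
    (hv : ∃ U : Set (ℝ × ℝ), IsOpen U ∧ (Set.univ ×ˢ Set.Icc (-1 : ℝ) 0) ⊆ U ∧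
      ContDiffOn ℝ 2 (Function.uncurry v) U)
    (w : ℝ → ℝ → ℝ)
    (hw : w = fun a b : ℝ => v a ((b - f a) / (1 + f a))) :
    ∀ x y : ℝ, -1 < y → y < 0 →
      deriv (deriv (fun s => w s (y + (1 + y) * f x))) x
          + deriv (deriv (fun s => w x s)) (y + (1 + y) * f x)
        = deriv (deriv (fun s => v s y)) x
          - 2 * ((1 + y) * deriv f x / (1 + f x)) *
              deriv (fun s => deriv (fun t => v s t) y) x
          + (((1 + y) ^ 2 * (deriv f x) ^ 2 + 1) / (1 + f x) ^ 2) *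
              deriv (deriv (fun t => v x t)) y
          - (1 + y) * ((1 + f x) * deriv (deriv f) x - 2 * (deriv f x) ^ 2) / (1 + f x) ^ 2 *
              deriv (fun t => v x t) y := by
  intro x y hy1 hy0
  obtain ⟨U, hU, hsub, hvU⟩ := hv
  set F := Function.uncurry v with hFdef
  have hF : ContDiffAt ℝ 2 F (x, y) :=
    hvU.contDiffAt (hU.mem_nhds (hsub ⟨trivial, hy1.le, hy0.le⟩))
  have hpos : ∀ s, 1 + f s ≠ 0 := fun s => by
    have := (abs_lt.1 (hsmall s)).1
    linarith
  have hfd : ∀ s, HasDerivAt f (deriv f s) s := fun s =>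
    (hf.differentiable (by norm_num) s).hasDerivAt
  have hfdd : HasDerivAt (deriv f) (deriv (deriv f) x) x :=
    ((hf.deriv' (n := 1)).differentiable (by norm_num) x).hasDerivAt
  subst hw
  set b := y + (1 + y) * f x with hb
  have hbx : (b - f x) / (1 + f x) = y := by
    rw [div_eq_iff (hpos x), hb]; ring
  have hg : ∀ s, HasDerivAt (fun s => (b - f s) / (1 + f s))
      (-(b + 1) * deriv f s / (1 + f s) ^ 2) s := fun s => by
    refine (((hfd s).const_sub b).div ((hfd s).const_add 1) (hpos s)).congr_deriv ?_
    ring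
  have hgg : HasDerivAt (fun s => -(b + 1) * deriv f s / (1 + f s) ^ 2)
      (-(1 + y) * ((1 + f x) * deriv (deriv f) x - 2 * (deriv f x) ^ 2) / (1 + f x) ^ 2) x := by
    refine ((hfdd.const_mul (-(b + 1))).div (((hfd x).const_add 1).pow 2)
      (pow_ne_zero 2 (hpos x))).congr_deriv ?_
    have := hpos x
    simp only [Pi.pow_apply, hb]
    field_simp
    ring
  have hl : ∀ s, HasDerivAt (fun s => (s - f x) / (1 + f x)) (1 / (1 + f x)) s := fun s =>
    ((hasDerivAt_id s).sub_const (f x)).div_const (1 + f x)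
  -- The curves whose images under `F` are the one-variable functions of the statement.
  have e1 := deriv_deriv_comp_curve (F := F) (t := x)
    (c := fun s => (s, (b - f s) / (1 + f s)))
    (vel := fun s => (1, -(b + 1) * deriv f s / (1 + f s) ^ 2))
    (by simpa only [hbx] using hF) (fun s => (hasDerivAt_id s).prodMk (hg s))
    ((hasDerivAt_const x (1 : ℝ)).prodMk hgg)
  have e2 := deriv_deriv_comp_curve (F := F) (t := b)
    (c := fun s => (x, (s - f x) / (1 + f x))) (vel := fun _ => (0, 1 / (1 + f x)))
    (by simpa only [hbx] using hF) (fun s => (hasDerivAt_const s x).prodMk (hl s))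
    (hasDerivAt_const b _)
  have e3 := deriv_deriv_comp_curve (F := F) (t := x) (c := fun s => (s, y))
    (vel := fun _ => (1, 0)) hF (fun s => (hasDerivAt_id s).prodMk (hasDerivAt_const s y))
    (hasDerivAt_const x _)
  have hvert : ∀ a s : ℝ, HasDerivAt (fun s : ℝ => (a, s)) ((0 : ℝ), (1 : ℝ)) s := fun a s =>
    (hasDerivAt_const s a).prodMk (hasDerivAt_id s)
  have e4 := deriv_deriv_comp_curve (F := F) (t := y) (c := fun s => (x, s))
    (vel := fun _ => (0, 1)) hF (hvert x) (hasDerivAt_const y _)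
  have e5 : deriv (fun t => v x t) y = fderiv ℝ F (x, y) (0, 1) :=
    (eventually_hasDerivAt_comp_curve (F := F) (c := fun s => (x, s))
      hF (hvert x)).self_of_nhds.deriv
  have e6 : deriv (fun s => deriv (fun t => v s t) y) x
      = fderiv ℝ (fderiv ℝ F) (x, y) (1, 0) (0, 1) := by
    have hh : ∀ s : ℝ, HasDerivAt (fun s : ℝ => (s, y)) ((1 : ℝ), (0 : ℝ)) s := fun s =>
      (hasDerivAt_id s).prodMk (hasDerivAt_const s y)
    have h : (fun s => deriv (fun t => v s t) y) =ᶠ[nhds x]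
        fun s => fderiv ℝ F (s, y) (0, 1) := by
      -- The whole line `ℝ × {y}` lies in `U`, so the formula holds for every `s`.
      refine Filter.Eventually.of_forall fun s => ?_
      have hFs : ContDiffAt ℝ 2 F (s, y) :=
        hvU.contDiffAt (hU.mem_nhds (hsub ⟨trivial, hy1.le, hy0.le⟩))
      exact (eventually_hasDerivAt_comp_curve (F := F) (c := fun r => (s, r))
        hFs (hvert s)).self_of_nhds.deriv
    rw [h.deriv_eq]
    have h2 := (HasFDerivAt.comp_hasDerivAt (f := fun s : ℝ => (s, y)) x
      (hasFDerivAt_fderiv_of_contDiffAt hF) (hh x)).clm_apply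
      (hasDerivAt_const x ((0 : ℝ), (1 : ℝ)))
    simpa using h2.deriv
  have hsymm : fderiv ℝ (fderiv ℝ F) (x, y) (0, 1) (1, 0)
      = fderiv ℝ (fderiv ℝ F) (x, y) (1, 0) (0, 1) :=
    (hF.isSymmSndFDerivAt (by simp)).eq _ _
  have hdec : ∀ p q : ℝ, ((p, q) : ℝ × ℝ) = p • ((1 : ℝ), (0 : ℝ)) + q • ((0 : ℝ), (1 : ℝ)) :=
    fun p q => by simp
  have hD : ∀ p q : ℝ, fderiv ℝ (fderiv ℝ F) (x, y) (p, q) (p, q)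
      = p ^ 2 * fderiv ℝ (fderiv ℝ F) (x, y) (1, 0) (1, 0)
        + 2 * p * q * fderiv ℝ (fderiv ℝ F) (x, y) (1, 0) (0, 1)
        + q ^ 2 * fderiv ℝ (fderiv ℝ F) (x, y) (0, 1) (0, 1) := fun p q => by
    rw [hdec p q]
    simp only [map_add, map_smul, add_apply, smul_apply, smul_eq_mul, hsymm]
    ring
  have hd : ∀ q : ℝ, fderiv ℝ F (x, y) (0, q) = q * fderiv ℝ F (x, y) (0, 1) := fun q => by
    rw [hdec 0 q]
    simp only [map_add, map_smul, smul_eq_mul, zero_mul, zero_add]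
  simp only [hbx, map_zero] at e1 e2 e3 e4
  rw [hD, hd] at e1
  rw [hD] at e2
  simp only [hFdef, Function.uncurry_apply_pair] at e1 e2 e3 e4 e5 e6
  rw [e1, e2, e3, e4, e5, e6, hb]
  have := hpos x
  field_simp
  ring
end

section
/- Let γ > 0, ϖ ≤ 0, and c ∈ ℝ. Suppose f : ℝ → ℝ is twice continuously differentiable, 2π-periodic, satisfies γ·f''(x)/(1 + f'(x)²)^(3/2) + ϖ·f(x) = c for all x ∈ ℝ, and ∫₀^{2π} f(x) dx = 0. Then f ≡ 0. -/
open Real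

/-!
The curvature is a derivative: `κ(f) = (f' / √(1 + f'²))'`. Testing the equation with `f` over one
period and integrating by parts gives
`γ ∫ f'² / √(1 + f'²) - ϖ ∫ f² = -c ∫ f = 0`. Both terms on the left are nonnegative, so `f' ≡ 0`,
and a constant with zero mean vanishes. The integration by parts is phrased through the primitive
`H(x) = γ f' f / √(1 + f'²) - c ∫ₐˣ f` of the integrand `γ f'² / √(1 + f'²) - ϖ f²`: it is monotone
and takes equal values at `a` and `a + 2π`, hence is constant in between.
-/

lemma rpow_three_halves_eq_sqrt_pow {y : ℝ} (hy : 0 ≤ y) : y ^ ((3 : ℝ) / 2) = √y ^ 3 := by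
  rw [Real.sqrt_eq_rpow, ← Real.rpow_natCast, ← Real.rpow_mul hy]
  norm_num

/-- The curvature of a graph with slope `p` is the derivative of `p / √(1 + p²)`. -/
lemma hasDerivAt_div_sqrt_one_add_sq {p : ℝ → ℝ} {q x : ℝ} (hp : HasDerivAt p q x) :
    HasDerivAt (fun y => p y / √(1 + p y ^ 2)) (q / √(1 + p x ^ 2) ^ 3) x := by
  have hpos : 0 < 1 + p x ^ 2 := by positivity
  have hs : 0 < √(1 + p x ^ 2) := Real.sqrt_pos.2 hpos
  have hsq : √(1 + p x ^ 2) ^ 2 = 1 + p x ^ 2 := Real.sq_sqrt hpos.le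
  have h := hp.fun_div (((hp.fun_pow 2).const_add 1).sqrt hpos.ne') hs.ne'
  refine h.congr_deriv ?_
  generalize √(1 + p x ^ 2) = s at hs hsq ⊢
  field_simp
  rw [hsq]
  push_cast
  ring

theorem eq_of_monotone_endpoints {H : ℝ → ℝ} (hH : Monotone H) {a b y : ℝ} (hab : H a = H b)
    (ha : a ≤ y) (hb : y ≤ b) : H y = H a :=
  le_antisymm ((hH hb).trans hab.ge) (hH ha)

/-- if the fluid on the bottom is at least as dense as the fluid above
(`ϖ ≤ 0`) and `γ > 0`, then the only `2π`-periodic zero-mean solution of the steady-state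
equation `γ·f''/(1+f'²)^(3/2) + ϖ·f = c` is the flat interface `f ≡ 0`. -/
theorem muskat_steady_state_trivial (γ ϖ c : ℝ) (hγ : 0 < γ) (hϖ : ϖ ≤ 0)
    (f : ℝ → ℝ) (hf : ContDiff ℝ 2 f)
    (hper : ∀ x, f (x + 2 * π) = f x)
    (hode : ∀ x, γ * deriv (deriv f) x / (1 + (deriv f x) ^ 2) ^ ((3 : ℝ) / 2)
      + ϖ * f x = c)
    (hmean : ∫ x in (0 : ℝ)..(2 * π), f x = 0) :
    ∀ x, f x = 0 := by
  have hfd : Differentiable ℝ f := hf.differentiable (by norm_num)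
  have hf'd : Differentiable ℝ (deriv f) :=
    (hf.deriv' (n := 1)).differentiable (by norm_num)
  have hper' : ∀ x, deriv f (x + 2 * π) = deriv f x := by
    intro x
    rw [← deriv_comp_add_const, funext hper]
  have hmean' : ∀ a, ∫ x in a..(a + 2 * π), f x = 0 := by
    intro a
    have h := Function.Periodic.intervalIntegral_add_eq (f := f) (T := 2 * π) hper a 0
    rw [h, zero_add, hmean]
  have hderiv : ∀ x, deriv f x = 0 := by
    intro x
    -- Base the primitive at `x - π`, so that `x` is interior to the period `[x - π, x + π]`.
    set a := x - π with ha
    set H : ℝ → ℝ := fun y =>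
      γ * (deriv f y / √(1 + deriv f y ^ 2) * f y) - c * ∫ t in a..y, f t with hH
    have hHd : ∀ y, HasDerivAt H
        (γ * (deriv f y ^ 2 / √(1 + deriv f y ^ 2)) - ϖ * f y ^ 2) y := by
      intro y
      have h1 := (hasDerivAt_div_sqrt_one_add_sq (hf'd y).hasDerivAt).fun_mul (hfd y).hasDerivAt
      have h2 := (hf.continuous.integral_hasStrictDerivAt a y).hasDerivAt
      refine ((h1.const_mul γ).fun_sub (h2.const_mul c)).congr_deriv ?_
      have ho := hode y
      rw [rpow_three_halves_eq_sqrt_pow (by positivity)] at ho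
      rw [← ho]
      ring
    have hmono : Monotone H := by
      refine monotone_of_deriv_nonneg (fun y => (hHd y).differentiableAt) fun y => ?_
      rw [(hHd y).deriv]
      have h1 : 0 ≤ γ * (deriv f y ^ 2 / √(1 + deriv f y ^ 2)) := by positivity
      nlinarith [mul_nonneg (neg_nonneg.2 hϖ) (sq_nonneg (f y))]
    have hends : H a = H (a + 2 * π) := by
      simp only [hH, hper, hper', hmean', intervalIntegral.integral_same]
    have hconst : H =ᶠ[nhds x] fun _ => H a := by
      filter_upwards [Icc_mem_nhds (show a < x by linarith [Real.pi_pos])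
        (show x < a + 2 * π by linarith [Real.pi_pos])] with y hy
      exact eq_of_monotone_endpoints hmono hends hy.1 hy.2
    have h0 : γ * (deriv f x ^ 2 / √(1 + deriv f x ^ 2)) - ϖ * f x ^ 2 = 0 := by
      rw [← (hHd x).deriv, hconst.deriv_eq, deriv_const]
    by_contra hne
    have h1 : 0 < γ * (deriv f x ^ 2 / √(1 + deriv f x ^ 2)) := by positivity
    nlinarith [mul_nonneg (neg_nonneg.2 hϖ) (sq_nonneg (f x))]
  have hc : ∀ x, f x = f 0 := fun x => is_const_of_deriv_eq_zero hfd hderiv x 0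
  have h0 : f 0 = 0 := by
    rw [funext hc, intervalIntegral.integral_const, smul_eq_mul, sub_zero] at hmean
    exact (mul_eq_zero.1 hmean).resolve_left (by positivity)
  intro x
  rw [hc x, h0]
end

section
/- Let f : ℝ → ℝ be continuously differentiable and 2π-periodic with sup|f| < 1, and let u : ℝ² → ℝ be twice continuously differentiable on an open set containing the closed region {(x,y) : f(x) ≤ y ≤ 1}, harmonic on Ω₊(f) = {(x,y) : f(x) < y < 1}, and 2π-periodic in x. Then ∫₀^{2π} ⟨∇u(x, f(x)), (−f'(x), 1)⟩ dx = ∫₀^{2π} ∂u/∂y(x, 1) dx. In particular, if ∂u/∂y(x,1) = 0 for all x, then ∫₀^{2π} ⟨∇u(x,f(x)), (−f'(x),1)⟩ dx = 0. -/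
/-!
Fix the height `h = 1 - f > 0` and flatten the fluid domain by
`(x, s) ↦ (x, f x + s h x)`, with `s ∈ [0, 1]`. Set `φ (x, s) = h x · u_x(x, f x + s h x)`.
Since `u` is harmonic, `∂_x φ` equals `∂_s A` for the flux
`A (x, s) = (1 - s) f' x · u_x - u_y`, both evaluated at the flattened point; so
`∫₀¹ ∂_x φ ds = A (x, 1) - A (x, 0)` is exactly the difference of the two boundary integrands.
Integrating over a period and exchanging the order of integration gives
`∫₀¹ (φ (2π, s) - φ (0, s)) ds`, which vanishes by periodicity. Because `∂_x φ` involves only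
`f'`, it is enough that `f` is `C¹`.
-/

open Real Set Filter Topology MeasureTheory

/-- A continuous `D` on the strip `ℝ × [0, 1]` that is the `x`-derivative of a function with
equal values at `x = 0` and `x = T` and is, for `0 < s < 1`, the `s`-derivative of `A` has
`∫₀ᵀ (A (x, 1) - A (x, 0)) dx = 0`. -/
lemma integral_flux_eq_zero {T : ℝ} {D φ A : ℝ → ℝ → ℝ}
    (hD : ContinuousOn (Function.uncurry D) (univ ×ˢ Icc 0 1))
    (hφ : ∀ x, ∀ s ∈ Icc (0 : ℝ) 1, HasDerivAt (fun x => φ x s) (D x s) x)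
    (hφper : ∀ s ∈ Icc (0 : ℝ) 1, φ T s = φ 0 s)
    (hA : ∀ x, ContinuousOn (A x) (Icc 0 1))
    (hA' : ∀ x, ∀ s ∈ Ioo (0 : ℝ) 1, HasDerivAt (A x) (D x s) s) :
    ∫ x in (0 : ℝ)..T, (A x 1 - A x 0) = 0 := by
  have hs : ∀ x, IntervalIntegrable (D x) volume 0 1 := by
    intro x
    apply ContinuousOn.intervalIntegrable
    rw [uIcc_of_le zero_le_one]
    exact hD.comp (f := fun s => (x, s)) (by fun_prop) (fun s hs => ⟨mem_univ _, hs⟩)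
  have h1 : ∀ x, A x 1 - A x 0 = ∫ s in (0 : ℝ)..1, D x s := fun x =>
    (intervalIntegral.integral_eq_sub_of_hasDerivAt_of_le zero_le_one (hA x) (hA' x) (hs x)).symm
  simp_rw [h1, intervalIntegral.integral_of_le zero_le_one]
  rw [intervalIntegral_integral_swap, ← intervalIntegral.integral_of_le zero_le_one]
  · refine (intervalIntegral.integral_congr ?_).trans intervalIntegral.integral_zero
    intro s hs
    rw [uIcc_of_le zero_le_one] at hs
    have hx : ContinuousOn (fun x => D x s) (uIcc 0 T) :=
      hD.comp (f := fun x => (x, s)) (by fun_prop) (fun x _ => ⟨mem_univ _, hs⟩)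
    have := intervalIntegral.integral_eq_sub_of_hasDerivAt (a := 0) (b := T)
      (f := fun x => φ x s) (f' := fun x => D x s) (fun x _ => hφ x s hs) hx.intervalIntegrable
    simp only [this, hφper s hs, sub_self]
  · have hc : IntegrableOn (Function.uncurry D) (uIcc 0 T ×ˢ uIcc 0 1) := by
      apply ContinuousOn.integrableOn_compact (isCompact_uIcc.prod isCompact_uIcc)
      refine hD.mono (prod_mono (subset_univ _) ?_)
      rw [uIcc_of_le zero_le_one]
    rw [Measure.prod_restrict, ← uIoc_of_le zero_le_one]
    exact hc.mono_set (prod_mono uIoc_subset_uIcc uIoc_subset_uIcc)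

lemma deriv_fst_slice {u : ℝ → ℝ → ℝ} {x y : ℝ}
    (h : DifferentiableAt ℝ (Function.uncurry u) (x, y)) :
    HasDerivAt (fun s => u s y) (fderiv ℝ (Function.uncurry u) (x, y) (1, 0)) x :=
  h.hasFDerivAt.comp_hasDerivAt (f := fun s : ℝ => (s, y)) x
    ((hasDerivAt_id x).prodMk (hasDerivAt_const x y))

lemma deriv_snd_slice {u : ℝ → ℝ → ℝ} {x y : ℝ}
    (h : DifferentiableAt ℝ (Function.uncurry u) (x, y)) :
    HasDerivAt (fun t => u x t) (fderiv ℝ (Function.uncurry u) (x, y) (0, 1)) y :=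
  h.hasFDerivAt.comp_hasDerivAt (f := fun t : ℝ => (x, t)) y
    ((hasDerivAt_const y x).prodMk (hasDerivAt_id y))

/-- the divergence-theorem identity behind conservation of volume for the
Muskat problem: for a `2π`-periodic harmonic potential `u` on the domain
`Ω₊(f) = {(x,y) : f(x) < y < 1}`, `C²` on a neighbourhood of the closed region,
`∫₀^{2π} ⟨∇u(x,f(x)), (−f'(x),1)⟩ dx = ∫₀^{2π} ∂u/∂y(x,1) dx`; in particular the
left-hand side vanishes when the Neumann datum on the top boundary is zero. -/
theorem muskat_volume_conservation (f : ℝ → ℝ)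
    (hf : ContDiff ℝ 1 f) (hper : ∀ x, f (x + 2 * π) = f x) (hsmall : ∀ x, |f x| < 1)
    (u : ℝ → ℝ → ℝ)
    (hreg : ∃ U : Set (ℝ × ℝ), IsOpen U ∧ {p : ℝ × ℝ | f p.1 ≤ p.2 ∧ p.2 ≤ 1} ⊆ U ∧
      ContDiffOn ℝ 2 (Function.uncurry u) U)
    (hharm : ∀ x y : ℝ, f x < y → y < 1 →
      deriv (deriv (fun s => u s y)) x + deriv (deriv (fun t => u x t)) y = 0)
    (huper : ∀ x y : ℝ, u (x + 2 * π) y = u x y) :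
    (∫ x in (0 : ℝ)..(2 * π),
        (-(deriv f x) * deriv (fun s => u s (f x)) x + deriv (fun t => u x t) (f x)))
      = ∫ x in (0 : ℝ)..(2 * π), deriv (fun t => u x t) 1 ∧
    ((∀ x : ℝ, deriv (fun t => u x t) 1 = 0) →
      (∫ x in (0 : ℝ)..(2 * π),
          (-(deriv f x) * deriv (fun s => u s (f x)) x + deriv (fun t => u x t) (f x)))
        = 0) := by
  obtain ⟨U, hU, hsub, hu⟩ := hreg
  -- `P = u_x` and `Q = u_y`, both `C¹` on `U`.
  set P : ℝ × ℝ → ℝ := fun p => fderiv ℝ (Function.uncurry u) p (1, 0) with hPdef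
  set Q : ℝ × ℝ → ℝ := fun p => fderiv ℝ (Function.uncurry u) p (0, 1) with hQdef
  have hdu : ContDiffOn ℝ 1 (fderiv ℝ (Function.uncurry u)) U :=
    hu.fderiv_of_isOpen hU (by norm_num)
  have hP : ContDiffOn ℝ 1 P U := hdu.clm_apply contDiffOn_const
  have hQ : ContDiffOn ℝ 1 Q U := hdu.clm_apply contDiffOn_const
  have hdiff : ∀ p ∈ U, DifferentiableAt ℝ (Function.uncurry u) p := fun p hp =>
    (hu.differentiableOn (by norm_num)).differentiableAt (hU.mem_nhds hp)
  have hPd : ∀ p ∈ U, DifferentiableAt ℝ P p := fun p hp =>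
    (hP.differentiableOn (by norm_num)).differentiableAt (hU.mem_nhds hp)
  have hQd : ∀ p ∈ U, DifferentiableAt ℝ Q p := fun p hp =>
    (hQ.differentiableOn (by norm_num)).differentiableAt (hU.mem_nhds hp)
  have hux : ∀ x y, (x, y) ∈ U → deriv (fun s => u s y) x = P (x, y) := fun x y h =>
    (deriv_fst_slice (hdiff _ h)).deriv
  have huy : ∀ x y, (x, y) ∈ U → deriv (fun t => u x t) y = Q (x, y) := fun x y h =>
    (deriv_snd_slice (hdiff _ h)).deriv
  have huxx : ∀ x y, (x, y) ∈ U →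
      deriv (deriv (fun s => u s y)) x = fderiv ℝ P (x, y) (1, 0) := by
    intro x y h
    have hev : deriv (fun s => u s y) =ᶠ[𝓝 x] fun s => P (s, y) := by
      have : ∀ᶠ s in 𝓝 x, (s, y) ∈ U :=
        (Continuous.prodMk_left y).continuousAt.preimage_mem_nhds (hU.mem_nhds h)
      filter_upwards [this] with s hs using hux s y hs
    rw [hev.deriv_eq]
    exact (deriv_fst_slice (u := fun a b => P (a, b)) (hPd _ h)).deriv
  have huyy : ∀ x y, (x, y) ∈ U →
      deriv (deriv (fun t => u x t)) y = fderiv ℝ Q (x, y) (0, 1) := by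
    intro x y h
    have hev : deriv (fun t => u x t) =ᶠ[𝓝 y] fun t => Q (x, t) := by
      have : ∀ᶠ t in 𝓝 y, (x, t) ∈ U :=
        (Continuous.prodMk_right x).continuousAt.preimage_mem_nhds (hU.mem_nhds h)
      filter_upwards [this] with t ht using huy x t ht
    rw [hev.deriv_eq]
    exact (deriv_snd_slice (u := fun a b => Q (a, b)) (hQd _ h)).deriv
  have hpos : ∀ x, 0 < 1 - f x := fun x => by linarith [(abs_lt.1 (hsmall x)).2]
  have hfd : ∀ x, HasDerivAt f (deriv f x) x := fun x =>
    (hf.differentiable (by norm_num) x).hasDerivAt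
  have hfc : Continuous f := hf.continuous
  have hf'c : Continuous (deriv f) := hf.continuous_deriv (by norm_num)
  -- The flattening map.
  set G : ℝ → ℝ → ℝ × ℝ := fun x s => (x, f x + s * (1 - f x)) with hG
  have hGU : ∀ x, ∀ s ∈ Icc (0 : ℝ) 1, G x s ∈ U := by
    intro x s hs
    refine hsub ⟨?_, ?_⟩
    · show f x ≤ f x + s * (1 - f x)
      nlinarith [hpos x, hs.1]
    · show f x + s * (1 - f x) ≤ 1
      nlinarith [hpos x, hs.2]
  have hGc : Continuous (Function.uncurry G) := by
    show Continuous fun p : ℝ × ℝ => (p.1, f p.1 + p.2 * (1 - f p.1))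
    fun_prop
  have hG0 : ∀ x, G x 0 = (x, f x) := fun x => by simp [hG]
  have hG1 : ∀ x, G x 1 = (x, 1) := fun x => by simp [hG]
  have hGx : ∀ x s, HasDerivAt (fun x => G x s) (1, deriv f x * (1 - s)) x := by
    intro x s
    have := (hasDerivAt_id x).prodMk ((hfd x).add (((hfd x).const_sub 1).const_mul s))
    exact this.congr_deriv (Prod.ext rfl (by ring))
  have hGs : ∀ x s, HasDerivAt (G x) (0, 1 - f x) s := by
    intro x s
    have := (hasDerivAt_const s x).prodMk
      (((hasDerivAt_id s).mul_const (1 - f x)).const_add (f x))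
    exact this.congr_deriv (Prod.ext rfl (by ring))
  have hb0 : ∀ x, (x, f x) ∈ U := fun x => hG0 x ▸ hGU x 0 (by simp)
  have hb1 : ∀ x, (x, (1 : ℝ)) ∈ U := fun x => hG1 x ▸ hGU x 1 (by simp)
  have key : ∫ x in (0 : ℝ)..(2 * π),
      (((1 - 1) * deriv f x * P (G x 1) - Q (G x 1)) -
        ((1 - 0) * deriv f x * P (G x 0) - Q (G x 0))) = 0 := by
    apply integral_flux_eq_zero (A := fun x s => (1 - s) * deriv f x * P (G x s) - Q (G x s))
      (φ := fun x s => (1 - f x) * P (G x s))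
      (D := fun x s => -deriv f x * P (G x s) +
        (1 - f x) * fderiv ℝ P (G x s) (1, deriv f x * (1 - s)))
    · have hmaps : MapsTo (Function.uncurry G) (univ ×ˢ Icc 0 1) U := fun p hp => hGU _ _ hp.2
      have c1 : ContinuousOn (fun p : ℝ × ℝ => P (G p.1 p.2)) (univ ×ˢ Icc 0 1) :=
        hP.continuousOn.comp hGc.continuousOn hmaps
      have c2 : ContinuousOn (fun p : ℝ × ℝ => fderiv ℝ P (G p.1 p.2)) (univ ×ˢ Icc 0 1) :=
        (hP.continuousOn_fderiv_of_isOpen hU le_rfl).comp hGc.continuousOn hmaps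
      have c3 : Continuous fun p : ℝ × ℝ => ((1 : ℝ), deriv f p.1 * (1 - p.2)) := by fun_prop
      have c4 : Continuous fun p : ℝ × ℝ => -deriv f p.1 := by fun_prop
      have c5 : Continuous fun p : ℝ × ℝ => 1 - f p.1 := by fun_prop
      exact (c4.continuousOn.mul c1).add (c5.continuousOn.mul (c2.clm_apply c3.continuousOn))
    · intro x s hs
      have h1 := (hPd _ (hGU x s hs)).hasFDerivAt.comp_hasDerivAt x (hGx x s)
      exact ((hfd x).const_sub 1).mul h1
    · intro s hs
      have hf0 : f (2 * π) = f 0 := by simpa using hper 0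
      have e1 : G (2 * π) s = (0 + 2 * π, f 0 + s * (1 - f 0)) := by simp [hG, hf0]
      have m1 := e1 ▸ hGU (2 * π) s hs
      have : P (G (2 * π) s) = P (G 0 s) := by
        rw [e1, ← hux _ _ m1, ← hux 0 _ (hGU 0 s hs), ← deriv_comp_add_const]
        simp only [huper]
      simp only [this, hf0]
    · intro x
      have hmaps : MapsTo (G x) (Icc 0 1) U := fun s hs => hGU _ _ hs
      have hGxc : Continuous (G x) := hGc.comp (Continuous.prodMk_right x)
      have c1 : Continuous fun s : ℝ => (1 - s) * deriv f x := by fun_prop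
      exact (c1.continuousOn.mul (hP.continuousOn.comp hGxc.continuousOn hmaps)).sub
        (hQ.continuousOn.comp hGxc.continuousOn hmaps)
    · intro x s hs
      have hm := hGU x s (Ioo_subset_Icc_self hs)
      have h1 := (((hasDerivAt_id s).const_sub 1).mul_const (deriv f x)).mul
        ((hPd _ hm).hasFDerivAt.comp_hasDerivAt s (hGs x s))
      have h2 := (hQd _ hm).hasFDerivAt.comp_hasDerivAt s (hGs x s)
      refine (h1.sub h2).congr_deriv ?_
      have hlap := hharm x (f x + s * (1 - f x)) (by nlinarith [hpos x, hs.1])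
        (by nlinarith [hpos x, hs.2])
      rw [huxx _ _ hm, huyy _ _ hm] at hlap
      change fderiv ℝ P (G x s) (1, 0) + fderiv ℝ Q (G x s) (0, 1) = 0 at hlap
      -- Expand the directional derivatives along the coordinate directions.
      have l1 : ((0 : ℝ), 1 - f x) = (1 - f x) • ((0 : ℝ), (1 : ℝ)) := by simp
      have l2 : ((1 : ℝ), deriv f x * (1 - s)) =
          ((1 : ℝ), (0 : ℝ)) + (deriv f x * (1 - s)) • ((0 : ℝ), (1 : ℝ)) := by simp
      rw [l1, l2, map_add, map_smul, map_smul, map_smul]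
      simp only [smul_eq_mul, id, Function.comp]
      linear_combination -(1 - f x) * hlap
  have hc0 : Continuous fun x : ℝ => (x, f x) := by fun_prop
  have hc1 : Continuous fun x : ℝ => (x, (1 : ℝ)) := by fun_prop
  have hi0 : Continuous fun x => -(deriv f x) * P (x, f x) + Q (x, f x) :=
    (hf'c.neg.mul (hP.continuousOn.comp_continuous hc0 hb0)).add
      (hQ.continuousOn.comp_continuous hc0 hb0)
  have hi1 : Continuous fun x => Q (x, (1 : ℝ)) := hQ.continuousOn.comp_continuous hc1 hb1
  have main : (∫ x in (0 : ℝ)..(2 * π),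
        (-(deriv f x) * deriv (fun s => u s (f x)) x + deriv (fun t => u x t) (f x)))
      = ∫ x in (0 : ℝ)..(2 * π), deriv (fun t => u x t) 1 := by
    have e0 : ∀ x, -(deriv f x) * deriv (fun s => u s (f x)) x + deriv (fun t => u x t) (f x)
        = -(deriv f x) * P (x, f x) + Q (x, f x) := fun x => by
      rw [hux _ _ (hb0 x), huy _ _ (hb0 x)]
    have e1 : ∀ x, deriv (fun t => u x t) 1 = Q (x, 1) := fun x => huy _ _ (hb1 x)
    simp_rw [e0, e1]
    rw [← sub_eq_zero, ← intervalIntegral.integral_sub (hi0.intervalIntegrable _ _)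
      (hi1.intervalIntegrable _ _), ← key]
    congr 1
    ext x
    rw [hG0, hG1]
    ring
  refine ⟨main, fun h => ?_⟩
  rw [main]
  simp [h]
end
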